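/- Let X be a metric space, f : X → X a 1-Lipschitz map, x₀ ∈ X, and l = lim_{n→∞} (1/n) d(x₀, f^n x₀) the drift of f. Then there exists a strictly increasing sequence of positive integers (n_i) such that for every k ≥ 1, limsup_{i→∞} ( d(f^k x₀, f^{n_i} x₀) − d(x₀, f^{n_i} x₀) ) ≤ −l·k. -/

import Mathlib

open Filter Topology

/-!
Write `a n = d(x₀, f^n x₀)`. For `ε > 0` the sequence `a n - (l - ε) n` tends to infinity, so it
has infinitely many record times `n`, at which it exceeds all its earlier values
(`frequently_record`). As `f` is 1-Lipschitz, `d(f^k x₀, f^n x₀) ≤ a (n - k)` for `k ≤ n`, and at a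
record time `a (n - k) ≤ a n - (l - ε) k`. Taking for `n_i` a record time for `ε = 1 / (i + 1)`,
increasing in `i`, and letting `i → ∞` gives the bound `-l k` on the limsup.
-/

/-- A sequence growing linearly at rate `l` has infinitely many indices `n` from which looking
back `n - m` steps costs at least `(l - ε) (n - m)`: these are the record times of
`a n - (l - ε) n`. -/
lemma frequently_record {a : ℕ → ℝ} {l : ℝ}
    (ha : Tendsto (fun n : ℕ => a n / n) atTop (𝓝 l)) {ε : ℝ} (hε : 0 < ε) :
    ∃ᶠ n in atTop, ∀ m < n, a m - (l - ε) * m < a n - (l - ε) * n := by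
  refine frequently_high_scores (u := fun n : ℕ => a n - (l - ε) * n) ?_
  have hlin : Tendsto (fun n : ℕ => ε / 2 * (n : ℝ)) atTop atTop :=
    tendsto_natCast_atTop_atTop.const_mul_atTop (half_pos hε)
  refine tendsto_atTop_mono' _ ?_ hlin
  filter_upwards [ha.eventually_const_lt (sub_lt_self l (half_pos hε)), eventually_gt_atTop 0]
    with n hn hpos
  have hn' : (0 : ℝ) < n := by exact_mod_cast hpos
  have := (lt_div_iff₀ hn').1 hn
  linarith

/-- Let `f` be 1-Lipschitz with drift `l = lim (1/n) d(x₀, f^n x₀)`. There exists a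
strictly increasing sequence of positive integers `(n_i)` such that for every `k ≥ 1`,
`limsup_i (d(f^k x₀, f^{n_i} x₀) − d(x₀, f^{n_i} x₀)) ≤ −l·k`. -/
theorem exists_subsequence_limsup_le {X : Type*} [MetricSpace X] (f : X → X)
    (hf : LipschitzWith 1 f) (x₀ : X) (l : ℝ)
    (hl : Tendsto (fun n : ℕ => dist x₀ (f^[n] x₀) / n) atTop (𝓝 l)) :
    ∃ ni : ℕ → ℕ, StrictMono ni ∧ (∀ i, 0 < ni i) ∧
      ∀ k : ℕ, 1 ≤ k →
        limsup (fun i : ℕ => dist (f^[k] x₀) (f^[ni i] x₀) - dist x₀ (f^[ni i] x₀)) atTop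
          ≤ -(l * k) := by
  obtain ⟨ni, hmono, hni⟩ := extraction_forall_of_frequently fun i : ℕ =>
    (frequently_record hl (Nat.one_div_pos_of_nat (α := ℝ) (n := i))).and_eventually
      (eventually_gt_atTop 0)
  refine ⟨ni, hmono, fun i => (hni i).2, fun k hk => ?_⟩
  have hbound : ∀ᶠ i in atTop, dist (f^[k] x₀) (f^[ni i] x₀) - dist x₀ (f^[ni i] x₀)
      ≤ -((l - 1 / ((i : ℝ) + 1)) * k) := by
    filter_upwards [hmono.tendsto_atTop.eventually_ge_atTop k] with i hi
    obtain ⟨m, hm⟩ := Nat.exists_eq_add_of_le hi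
    have hrec := (hni i).1 m (by omega)
    have hlip : dist (f^[k] x₀) (f^[ni i] x₀) ≤ dist x₀ (f^[m] x₀) := by
      rw [hm, Function.iterate_add_apply]
      simpa using (hf.iterate k).dist_le_mul x₀ (f^[m] x₀)
    have hcast : (ni i : ℝ) = k + m := by exact_mod_cast hm
    rw [hcast] at hrec
    linarith
  have hlim : Tendsto (fun i : ℕ => -((l - 1 / ((i : ℝ) + 1)) * k)) atTop (𝓝 (-(l * k))) := by
    simpa using ((tendsto_one_div_add_atTop_nhds_zero_nat (𝕜 := ℝ)).const_sub l
      |>.mul_const (k : ℝ)).neg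
  rw [← hlim.limsup_eq]
  -- The real-valued limsup is not a junk value: the triangle inequality bounds the differences
  -- below by `-d(x₀, f^k x₀)`.
  refine limsup_le_limsup hbound ?_ hlim.isBoundedUnder_le
  refine (isBoundedUnder_of ⟨-dist x₀ (f^[k] x₀), fun i => ?_⟩ :
    IsBoundedUnder (· ≥ ·) _ _).isCoboundedUnder_le
  have := dist_triangle x₀ (f^[k] x₀) (f^[ni i] x₀)
  simp only [ge_iff_le]
  linarith
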